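/- arXiv:2202.10120 — 2 statements merged into one kernel-verified Lean document; each statement's English description precedes it below -/
import Mathlib

section
/- Let p be an odd prime, let n ≥ 2, and let K be a field of characteristic p. Let M = ZMod p^n × ZMod p^n and let σ : M → M be the group automorphism σ(i,j) = (i, i + j). Then for every s ≥ 0: (a) the K-linear endomorphism of H^s(M; K) induced (by functoriality of group cohomology with trivial coefficients) by the automorphism σ^p is the identity; and (b) the sum ∑_{i=0}^{p^n − 1} (endomorphism of H^s(M; K) induced by σ^i) is the zero K-linear map. -/
noncomputable section

open CategoryTheory groupCohomology

variable (k : Type) [CommRing k] {G : Type} [Group G]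

/-- Precomposition with a group homomorphism `φ : G →* G` on inhomogeneous `n`-cochains with
trivial coefficients `k`. -/
def cochainPrecomp (φ : G →* G) (n : ℕ) :
    ((Fin n → G) → k) →ₗ[k] ((Fin n → G) → k) where
  toFun f := fun g => f fun i => φ (g i)
  map_add' _ _ := rfl
  map_smul' _ _ := rfl

@[simp] theorem cochainPrecomp_apply (φ : G →* G) (n : ℕ) (f : (Fin n → G) → k)
    (g : Fin n → G) : cochainPrecomp k φ n f g = f fun i => φ (g i) :=
  rfl

theorem comp_contractNth {n : ℕ} (φ : G →* G) (j : Fin (n + 1)) (g : Fin (n + 1) → G) :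
    (fun i => φ (Fin.contractNth j (· * ·) g i)) =
      Fin.contractNth j (· * ·) fun i => φ (g i) := by
  ext x
  rcases lt_trichotomy (x : ℕ) (j : ℕ) with h | h | h
  · rw [Fin.contractNth_apply_of_lt _ _ _ _ h, Fin.contractNth_apply_of_lt _ _ _ _ h]
  · rw [Fin.contractNth_apply_of_eq _ _ _ _ h, Fin.contractNth_apply_of_eq _ _ _ _ h, map_mul]
  · rw [Fin.contractNth_apply_of_gt _ _ _ _ h, Fin.contractNth_apply_of_gt _ _ _ _ h]

theorem cochainPrecomp_comm (φ : G →* G) (n : ℕ) :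
    (inhomogeneousCochains.d (Rep.trivial k G k) n).hom.comp (cochainPrecomp k φ n) =
      (cochainPrecomp k φ (n + 1)).comp (inhomogeneousCochains.d (Rep.trivial k G k) n).hom := by
  refine LinearMap.ext fun f => funext fun g => ?_
  refine congrArg (fun z : k => f (fun i => φ (g i.succ)) + z) ?_
  exact Finset.sum_congr rfl fun j _ =>
    congrArg (fun z => ((-1 : k) ^ ((j : ℕ) + 1) • z : k))
      (congrArg f (comp_contractNth φ j g))

/-- The chain map on inhomogeneous cochains (with trivial coefficients `k`) induced by
precomposition with a group homomorphism `φ : G →* G`. -/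
def cochainsMap (φ : G →* G) :
    inhomogeneousCochains (Rep.trivial k G k) ⟶ inhomogeneousCochains (Rep.trivial k G k) where
  f n := ModuleCat.ofHom (cochainPrecomp k φ n)
  comm' i j hij := by
    obtain rfl : i + 1 = j := hij
    have h1 : (inhomogeneousCochains (Rep.trivial k G k)).d i (i + 1) =
        inhomogeneousCochains.d (Rep.trivial k G k) i :=
      inhomogeneousCochains.d_def (Rep.trivial k G k) i
    rw [h1]
    exact ModuleCat.hom_ext (cochainPrecomp_comm k φ i)

/-- The `k`-linear endomorphism of `H^s(G; k)` (group cohomology with trivial coefficients)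
induced, by functoriality, by a group homomorphism `φ : G →* G`. -/
def cohomologyInducedMap (φ : G →* G) (s : ℕ) :
    groupCohomology (Rep.trivial k G k) s ⟶ groupCohomology (Rep.trivial k G k) s :=
  HomologicalComplex.homologyMap (cochainsMap k φ) s

/-- The group automorphism `σ(i,j) = (i, i+j)` of `M = ZMod q × ZMod q`, as a monoid
endomorphism of the multiplicative version of `M`. -/
def sigmaM (q : ℕ) : Monoid.End (Multiplicative (ZMod q × ZMod q)) :=
  AddMonoidHom.toMultiplicative
    { toFun := fun x => (x.1, x.1 + x.2)
      map_zero' := by simp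
      map_add' := fun x y => by simp [Prod.ext_iff]; ring }

namespace KoszulCalc

section alg
variable {R : Type} [CommRing R]

/-- periodic differential coefficients -/
def per (s N : R) (i : ℕ) : R := if i = 0 then 0 else if Odd i then s else N

/-- extension by zero -/
def ex {n : ℕ} (z : Fin n → R) (i : ℕ) : R := if h : i < n then z ⟨i, h⟩ else 0

lemma ex_of_lt {n : ℕ} (z : Fin n → R) {i : ℕ} (h : i < n) : ex z i = z ⟨i, h⟩ := dif_pos h
lemma ex_of_ge {n : ℕ} (z : Fin n → R) {i : ℕ} (h : n ≤ i) : ex z i = 0 := dif_neg (by omega)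
@[simp] lemma ex_fin {n : ℕ} (z : Fin n → R) (i : Fin n) : ex z i = z i := ex_of_lt z i.2
@[simp] lemma ex_add {n : ℕ} (z z' : Fin n → R) (i : ℕ) : ex (z + z') i = ex z i + ex z' i := by
  unfold ex; split <;> simp
@[simp] lemma ex_mul {n : ℕ} (r : R) (z : Fin n → R) (i : ℕ) :
    ex (fun j => r * z j) i = r * ex z i := by
  unfold ex; split <;> simp

variable (s N t N' : R)

def dP (n : ℕ) (z : Fin (n + 2) → R) (i : Fin (n + 1)) : R :=
  per s N (i + 1) * ex z (i + 1) + (-1) ^ (i : ℕ) * per t N' (n + 1 - i) * ex z i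

lemma ex_dP (n : ℕ) (z : Fin (n + 2) → R) (i : ℕ) : ex (dP s N t N' n z) i =
    per s N (i + 1) * ex z (i + 1) + (-1) ^ i * per t N' (n + 1 - i) * ex z i := by
  by_cases h : i < n + 1
  · rw [ex_of_lt _ h]; rfl
  · rw [ex_of_ge _ (by omega), ex_of_ge _ (by omega : n + 2 ≤ i + 1),
      show n + 1 - i = 0 by omega]
    simp [per]

variable {s N t N'}

lemma per_mul (h : s * N = 0) (i : ℕ) : per s N i * per s N (i + 1) = 0 := by
  unfold per
  rcases Nat.even_or_odd i with hi | hi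
  · have : ¬ Odd i := by simpa using hi
    have : Odd (i+1) := hi.add_one
    split <;> simp_all [mul_comm]
  · have : ¬ Odd (i+1) := by simpa using hi.add_one
    split <;> simp_all

lemma dP_dP (h : s * N = 0) (h' : t * N' = 0) (n : ℕ) (z : Fin (n + 3) → R) :
    dP s N t N' n (dP s N t N' (n + 1) z) = 0 := by
  funext i
  have hi : (i : ℕ) ≤ n := by omega
  have h1 := per_mul h (i + 1)
  have h2 := per_mul h' (n + 1 - i)
  rw [show n + 1 - (i:ℕ) + 1 = n + 2 - i by omega] at h2
  simp only [dP, ex_dP, Pi.zero_apply]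
  rw [show n + 1 + 1 - ((i : ℕ) + 1) = n + 1 - i by omega, show n + 1 + 1 - (i:ℕ) = n + 2 - i by omega]
  have h3 : ((-1 : R) ^ (i : ℕ)) * (-1) ^ (i : ℕ) = 1 := by rw [← mul_pow]; simp
  rw [show ((-1 : R) ^ ((i : ℕ)+1)) = - (-1) ^ (i : ℕ) by rw [pow_succ]; ring]
  linear_combination (ex z (i + 1 + 1)) * h1 + (ex z i * (-1) ^ (i : ℕ) * (-1) ^ (i : ℕ)) * h2

lemma dP_exact (ht : t * N' = 0)
    (h2 : ∀ x, s * x = 0 → ∃ y, x = N * y) (h3 : ∀ x, N * x = 0 → ∃ y, x = s * y)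
    (h4 : ∀ x y, t * x = s * y → ∃ a b, x = N' * a + s * b)
    (h5 : ∀ x y, N' * x = s * y → ∃ a b, x = t * a + s * b)
    (n : ℕ) (z : Fin (n + 2) → R) (hz : dP s N t N' n z = 0) :
    ∃ y, dP s N t N' (n + 1) y = z := by
  have hz' : ∀ i, per s N (i + 1) * ex z (i + 1) + (-1) ^ i * per t N' (n + 1 - i) * ex z i = 0 := by
    intro i
    rw [← ex_dP, hz]; unfold ex; simp
  have hper : ∀ i x, per s N (i + 1) * x = 0 → ∃ y, x = per s N (i + 2) * y := by
    intro i x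
    unfold per
    rcases Nat.even_or_odd i with hi | hi
    · have b1 : Odd (i+1) := hi.add_one
      have b2 : ¬ Odd (i+2) := by rw [Nat.odd_iff]; rw [Nat.even_iff] at hi; omega
      simp only [b1, b2, if_true, if_false, Nat.add_eq_zero_iff, one_ne_zero, OfNat.ofNat_ne_zero, and_false]
      exact h2 x
    · have b1 : ¬ Odd (i+1) := by rw [Nat.odd_iff] at *; omega
      have b2 : Odd (i+2) := (hi.add_one).add_one
      simp only [b1, b2, if_true, if_false, Nat.add_eq_zero_iff, one_ne_zero, OfNat.ofNat_ne_zero, and_false]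
      exact h3 x
  have hper' : ∀ i x y, per t N' (i + 1) * x = s * y → ∃ a b, x = per t N' (i + 2) * a + s * b := by
    intro i x y
    unfold per
    rcases Nat.even_or_odd i with hi | hi
    · have b1 : Odd (i+1) := hi.add_one
      have b2 : ¬ Odd (i+2) := by rw [Nat.odd_iff]; rw [Nat.even_iff] at hi; omega
      simp only [b1, b2, if_true, if_false, Nat.add_eq_zero_iff, one_ne_zero, OfNat.ofNat_ne_zero, and_false]
      exact h4 x y
    · have b1 : ¬ Odd (i+1) := by rw [Nat.odd_iff] at *; omega
      have b2 : Odd (i+2) := (hi.add_one).add_one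
      simp only [b1, b2, if_true, if_false, Nat.add_eq_zero_iff, one_ne_zero, OfNat.ofNat_ne_zero, and_false]
      exact h5 x y
  have key : ∀ m, ∃ y : ℕ → R, ∀ i ≤ m, i ≤ n + 1 →
      per s N (i + 1) * y (i + 1) + (-1) ^ i * per t N' (n + 2 - i) * y i = ex z i := by
    intro m
    induction m with
    | zero =>
      have h0 := hz' 0
      obtain ⟨a, b, hab⟩ := hper' n (ex z 0) (- ex z 1) (by
        simp [per] at h0 ⊢; linear_combination h0)
      refine ⟨fun i => if i = 0 then a else b, ?_⟩
      intro i hi _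
      obtain rfl : i = 0 := by omega
      rw [hab]; simp [per]; ring
    | succ m ih =>
      obtain ⟨y, hy⟩ := ih
      by_cases hm : m + 1 ≤ n + 1
      · have e1 := hy m le_rfl (by omega)
        have e2 := hz' m
        have e3 := per_mul ht (n + 1 - m)
        rw [show n + 1 - m + 1 = n + 2 - m by omega] at e3
        obtain ⟨b, hb⟩ := hper m (ex z (m+1) - (-1)^(m+1) * per t N' (n + 2 - (m+1)) * y (m+1)) (by
          rw [show n + 2 - (m+1) = n + 1 - m by omega]
          have h3 : ((-1 : R) ^ m) * (-1) ^ m = 1 := by rw [← mul_pow]; simp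
          rw [show ((-1 : R) ^ (m+1)) = - (-1) ^ m by rw [pow_succ]; ring]
          linear_combination e2 + (-1)^m * per t N' (n + 1 - m) * e1 - (-1)^m * (-1)^m * y m * e3)
        refine ⟨Function.update y (m + 2) b, ?_⟩
        intro i hi hi'
        rcases Nat.lt_or_ge i (m+1) with h | h
        · rw [Function.update_of_ne (by omega), Function.update_of_ne (by omega)]
          exact hy i (by omega) hi'
        · obtain rfl : i = m + 1 := by omega
          rw [Function.update_self, Function.update_of_ne (by omega)]
          linear_combination -hb
      · exact ⟨y, fun i hi hi' => hy i (by omega) hi'⟩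
  obtain ⟨y, hy⟩ := key (n + 1)
  refine ⟨fun i => y i, ?_⟩
  funext i
  have := hy i (by omega) (by omega)
  rw [ex_fin] at this
  rw [← this, dP, ex_of_lt _ (by omega), ex_of_lt _ (by omega)]

/-- correction coefficients -/
def cc (w e : R) (i j : ℕ) : R := if Odd j then 0 else if Odd i then w else e

/-- semilinear chain map -/
def phiP (φ : R →+* R) (w e : R) (n : ℕ) (z : Fin (n + 1) → R) (i : Fin (n + 1)) : R :=
  φ (z i) + cc w e (i + 1) (n - (i + 1)) * φ (ex z (i + 1))

lemma ex_phiP (φ : R →+* R) (w e : R) (n : ℕ) (z : Fin (n + 1) → R) (i : ℕ) :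
    ex (phiP φ w e n z) i = φ (ex z i) + cc w e (i + 1) (n - (i + 1)) * φ (ex z (i + 1)) := by
  by_cases h : i < n + 1
  · rw [ex_of_lt _ h, ex_of_lt _ h]; rfl
  · rw [ex_of_ge _ (by omega), ex_of_ge _ (by omega), ex_of_ge _ (by omega : n + 1 ≤ i + 1)]
    simp

lemma phiP_comm (φ : R →+* R) (w e : R) (h1 : φ s = s + t * w) (h2 : φ N = N - t * e)
    (h3 : w * φ N = s * e) (h4 : φ t = t) (h5 : φ N' = N') (n : ℕ) (z : Fin (n + 2) → R) :
    dP s N t N' n (phiP φ w e (n + 1) z) = phiP φ w e n (dP s N t N' n z) := by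
  have h6 : φ s * e = w * N := by rw [h1]; linear_combination -h3 + w * h2
  have hφt : ∀ i, φ (per t N' i) = per t N' i := by
    intro i; unfold per; split_ifs <;> simp [h4, h5]
  funext i
  have hi : (i : ℕ) ≤ n := by omega
  have hA : φ (per s N (i + 1)) + (-1) ^ ((i:ℕ)+1) * cc w e (i+1) (n - (i+1)) * per t N' (n - i)
     = per s N (i + 1) + (-1) ^ (i : ℕ) * per t N' (n + 1 - i) * cc w e (i + 1) (n - i) := by
    obtain ⟨j, hj⟩ : ∃ j, n - (i : ℕ) = j := ⟨_, rfl⟩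
    rw [show n + 1 - (i : ℕ) = j + 1 by omega, show n - ((i : ℕ) + 1) = j - 1 by omega, hj]
    rcases Nat.even_or_odd (i : ℕ) with hi | hi <;> rcases j with _ | j
    · have : Odd ((i:ℕ)+1) := hi.add_one
      simp [per, cc, this, hi.neg_one_pow, h1]
    · have : Odd ((i:ℕ)+1) := hi.add_one
      rcases Nat.even_or_odd j with hj | hj
      · have a1 : Odd (j + 1) := hj.add_one
        have a2 : ¬ Odd j := by simpa using hj
        simp [per, cc, this, hi.neg_one_pow, h1, a1, a2, this.neg_one_pow]; ring
      · have a1 : ¬ Odd (j + 1) := by simpa using hj.add_one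
        have a2 : Odd (j+1+1) := by simpa using (hj.add_one).add_one
        simp [per, cc, this, hi.neg_one_pow, h1, a1, a2, this.neg_one_pow, hj]
    · have : ¬ Odd ((i:ℕ)+1) := by simpa using hi.add_one
      simp [per, cc, this, hi.neg_one_pow, h2]; ring
    · have : ¬ Odd ((i:ℕ)+1) := by simpa using hi.add_one
      have this' : Even ((i:ℕ)+1) := by simpa using hi.add_one
      rcases Nat.even_or_odd j with hj | hj
      · have a1 : Odd (j + 1) := hj.add_one
        have a2 : ¬ Odd j := by simpa using hj
        simp [per, cc, this, hi.neg_one_pow, h2, a1, a2, this'.neg_one_pow]; ring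
      · have a1 : ¬ Odd (j + 1) := by simpa using hj.add_one
        have a2 : Odd (j+1+1) := by simpa using (hj.add_one).add_one
        simp [per, cc, this, hi.neg_one_pow, h2, a1, a2, this'.neg_one_pow, hj]; ring
  have hB : cc w e (i+1) (n - (i+1)) * φ (per s N (i + 2)) =
      per s N (i + 1) * cc w e (i+2) (n - (i+1)) := by
    rcases Nat.even_or_odd (i : ℕ) with hi | hi
    · have a1 : Odd ((i:ℕ)+1) := hi.add_one
      have a2 : ¬ Odd ((i:ℕ)+2) := by rw [Nat.odd_iff]; rw [Nat.even_iff] at hi; omega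
      simp only [per, cc, a1, a2]; split_ifs <;> simp_all
    · have a1 : ¬ Odd ((i:ℕ)+1) := by simpa using hi.add_one
      have a2 : Odd ((i:ℕ)+2) := (hi.add_one).add_one
      simp only [per, cc, a1, a2]; split_ifs <;> simp_all [mul_comm]
  simp only [dP, phiP, ex_dP, ex_phiP, map_add, map_mul, map_pow, map_neg, map_one, hφt]
  rw [show n + 1 - ((i : ℕ) + 1 + 1) = n - (i + 1) by omega,
    show n + 1 - ((i : ℕ) + 1) = n - i by omega]
  rw [show (i : ℕ) + 1 + 1 = i + 2 by rfl]
  linear_combination -(φ (ex z (i+1))) * hA - (φ (ex z (i+2))) * hB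

end alg
end KoszulCalc

set_option linter.unusedSectionVars false
namespace KoszulCalc
open MonoidAlgebra
section grp
variable {q : ℕ} [NeZero q] {K : Type} [Field K]

/-- the group -/
abbrev GG (q : ℕ) := Multiplicative (ZMod q × ZMod q)
/-- its group algebra -/
abbrev RR (K : Type) [Field K] (q : ℕ) := MonoidAlgebra K (GG q)

/-- basis vectors -/
def bs (K : Type) [Field K] {q : ℕ} (a b : ZMod q) (r : K) : RR K q :=
  MonoidAlgebra.single (Multiplicative.ofAdd (a, b)) r

lemma bs_mul (a b c d : ZMod q) (r r' : K) : bs K a b r * bs K c d r' = bs K (a + c) (b + d) (r * r') := by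
  unfold bs; rw [single_mul_single]; rfl

lemma bs_one : bs K (0 : ZMod q) 0 1 = 1 := rfl

lemma bs_pow (a b : ZMod q) (i : ℕ) : bs K a b 1 ^ i = bs K ((i : ZMod q) * a) ((i : ZMod q) * b) 1 := by
  induction i with
  | zero => simp [bs_one]
  | succ i ih => rw [pow_succ, ih, bs_mul]; push_cast; congr 1 <;> ring

lemma bs_induction {P : RR K q → Prop} (x : RR K q) (h0 : P 0) (ha : ∀ x y, P x → P y → P (x + y))
    (hb : ∀ a b r, P (bs K a b r)) : P x := by
  induction x using MonoidAlgebra.induction_linear with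
  | zero => exact h0
  | add x y hx hy => exact ha x y hx hy
  | single m r => exact hb m.toAdd.1 m.toAdd.2 r

/-- generators -/
def gg (K : Type) [Field K] (q : ℕ) : RR K q := bs K 1 0 1
/-- generators -/
def hh (K : Type) [Field K] (q : ℕ) : RR K q := bs K 0 1 1
/-- norm -/
def Nm (x : RR K q) : RR K q := ∑ i ∈ Finset.range q, x ^ i

lemma gg_pow (i : ℕ) : gg K q ^ i = bs K (i : ZMod q) 0 1 := by simp [gg, bs_pow]
lemma hh_pow (i : ℕ) : hh K q ^ i = bs K 0 (i : ZMod q) 1 := by simp [hh, bs_pow]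
lemma gg_pow_q : gg K q ^ q = 1 := by simp [gg_pow, bs_one]
lemma hh_pow_q : hh K q ^ q = 1 := by simp [hh_pow, bs_one]

/-- projection -/
def EE (K : Type) [Field K] (q : ℕ) : RR K q →+* RR K q :=
  mapDomainRingHom K (AddMonoidHom.toMultiplicative
    ((AddMonoidHom.inr (ZMod q) (ZMod q)).comp (AddMonoidHom.snd (ZMod q) (ZMod q))))

lemma EE_bs (a b : ZMod q) (r : K) : EE K q (bs K a b r) = bs K 0 b r := by
  simp [EE, bs]

/-- swap -/
def SW (K : Type) [Field K] (q : ℕ) : RR K q →+* RR K q :=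
  mapDomainRingHom K (AddMonoidHom.toMultiplicative
    ((AddEquiv.prodComm (M := ZMod q) (N := ZMod q)).toAddMonoidHom))

lemma SW_bs (a b : ZMod q) (r : K) : SW K q (bs K a b r) = bs K b a r := by
  simp [SW, bs]

lemma SW_SW (x : RR K q) : SW K q (SW K q x) = x := by
  induction x using bs_induction with
  | h0 => simp
  | ha x y hx hy => simp [hx, hy]
  | hb a b r => simp [SW_bs]

/-- restriction -/
def LL (K : Type) [Field K] (q : ℕ) : RR K q →+ RR K q where
  toFun x := .ofCoeff (x.coeff.filter (fun m : GG q => (Multiplicative.toAdd m).1 = 0))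
  map_zero' := by simp [Finsupp.filter_zero]
  map_add' x y := by simp [Finsupp.filter_add]

lemma LL_bs (a b : ZMod q) (r : K) : LL K q (bs K a b r) = if a = 0 then bs K a b r else 0 := by
  split_ifs with h
  · simp only [LL, AddMonoidHom.coe_mk, ZeroHom.coe_mk, bs]
    rw [MonoidAlgebra.coeff_single, Finsupp.filter_single_of_pos]
    · rfl
    · exact h
  · simp only [LL, AddMonoidHom.coe_mk, ZeroHom.coe_mk, bs]
    rw [MonoidAlgebra.coeff_single, Finsupp.filter_single_of_neg]
    · rfl
    · exact h

/-- augmentation -/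
def aug (K : Type) [Field K] (q : ℕ) : RR K q →+* K :=
  (MonoidAlgebra.lift K K (GG q) 1).toRingHom

lemma aug_bs (a b : ZMod q) (r : K) : aug K q (bs K a b r) = r := by
  simp [aug, bs]

lemma mul_Nm (x : RR K q) (h : x ^ q = 1) : (x - 1) * Nm x = 0 := by
  rw [Nm, mul_geom_sum, h, sub_self]

lemma sub_EE (x : RR K q) : ∃ y, x = EE K q x + (gg K q - 1) * y := by
  induction x using bs_induction with
  | h0 => exact ⟨0, by simp⟩
  | ha x y hx hy =>
    obtain ⟨a, ha⟩ := hx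
    obtain ⟨b, hb⟩ := hy
    exact ⟨a + b, by rw [map_add]; linear_combination ha + hb⟩
  | hb a b r =>
    refine ⟨(∑ i ∈ Finset.range a.val, gg K q ^ i) * bs K 0 b r, ?_⟩
    rw [← mul_assoc, mul_geom_sum, gg_pow, EE_bs, sub_mul, bs_mul]
    simp

lemma LL_Nm (x : RR K q) : LL K q (Nm (gg K q) * x) = EE K q x := by
  induction x using bs_induction with
  | h0 => simp
  | ha x y hx hy => rw [mul_add, map_add, map_add, hx, hy]
  | hb a b r =>
    rw [Nm, Finset.sum_mul, map_sum, EE_bs, Finset.sum_eq_single (-a).val]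
    · rw [gg_pow, bs_mul, LL_bs]; simp
    · intro i hi hne
      rw [gg_pow, bs_mul, LL_bs, if_neg]
      intro h
      apply hne
      rw [← ZMod.val_cast_of_lt (Finset.mem_range.1 hi)]
      congr 1
      linear_combination h
    · intro h
      exact absurd (Finset.mem_range.2 (ZMod.val_lt _)) h

lemma sum_LL (x : RR K q) :
    ∑ i ∈ Finset.range q, gg K q ^ i * LL K q (bs K (-(i : ZMod q)) 0 1 * x) = x := by
  induction x using bs_induction with
  | h0 => simp
  | ha x y hx hy =>
    conv_rhs => rw [← hx, ← hy]
    rw [← Finset.sum_add_distrib]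
    simp [mul_add]
  | hb a b r =>
    rw [Finset.sum_eq_single a.val]
    · rw [gg_pow, bs_mul, LL_bs]; simp [bs_mul]
    · intro i hi hne
      rw [gg_pow, bs_mul, LL_bs, if_neg, mul_zero]
      intro h
      apply hne
      rw [← ZMod.val_cast_of_lt (Finset.mem_range.1 hi)]
      congr 1
      linear_combination -h
    · intro h
      exact absurd (Finset.mem_range.2 (ZMod.val_lt _)) h

lemma fact2 (x : RR K q) (h : (gg K q - 1) * x = 0) : ∃ y, x = Nm (gg K q) * y := by
  refine ⟨LL K q x, ?_⟩
  have h1 : gg K q * x = x := by linear_combination h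
  have h2 : ∀ i : ℕ, gg K q ^ i * x = x := by
    intro i
    induction i with
    | zero => simp
    | succ i ih => rw [pow_succ, mul_assoc, h1, ih]
  conv_lhs => rw [← sum_LL x]
  rw [Nm, Finset.sum_mul]
  refine Finset.sum_congr rfl fun i _ => ?_
  conv_lhs => rw [← h2 i]
  rw [gg_pow, ← mul_assoc (bs K _ _ _), bs_mul]
  simp [bs_one]

lemma fact3 (x : RR K q) (h : Nm (gg K q) * x = 0) : ∃ y, x = (gg K q - 1) * y := by
  obtain ⟨y, hy⟩ := sub_EE x
  rw [← LL_Nm, h, map_zero, zero_add] at hy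
  exact ⟨y, hy⟩

lemma SW_gg : SW K q (gg K q) = hh K q := by simp [gg, hh, SW_bs]
lemma SW_hh : SW K q (hh K q) = gg K q := by simp [gg, hh, SW_bs]
lemma EE_gg : EE K q (gg K q) = 1 := by simp [gg, EE_bs, bs_one]
lemma EE_hh : EE K q (hh K q) = hh K q := by simp [hh, EE_bs]
lemma map_Nm (f : RR K q →+* RR K q) (x : RR K q) : f (Nm x) = Nm (f x) := by simp [Nm]

lemma fact2' (x : RR K q) (h : (hh K q - 1) * x = 0) : ∃ y, x = Nm (hh K q) * y := by
  obtain ⟨y, hy⟩ := fact2 (SW K q x) (by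
    have := congrArg (SW K q) h
    simpa [SW_hh] using this)
  refine ⟨SW K q y, ?_⟩
  have := congrArg (SW K q) hy
  simpa [SW_SW, map_Nm, SW_gg] using this

lemma fact3' (x : RR K q) (h : Nm (hh K q) * x = 0) : ∃ y, x = (hh K q - 1) * y := by
  obtain ⟨y, hy⟩ := fact3 (SW K q x) (by
    have := congrArg (SW K q) h
    simpa [SW_hh, map_Nm] using this)
  refine ⟨SW K q y, ?_⟩
  have := congrArg (SW K q) hy
  simpa [SW_SW, map_Nm, SW_gg] using this

lemma fact4 (x y : RR K q) (h : (hh K q - 1) * x = (gg K q - 1) * y) :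
    ∃ a b, x = Nm (hh K q) * a + (gg K q - 1) * b := by
  obtain ⟨b, hb⟩ := sub_EE x
  obtain ⟨a, ha⟩ := fact2' (EE K q x) (by
    have := congrArg (EE K q) h
    simpa [EE_hh, EE_gg] using this)
  exact ⟨a, b, by rw [← ha]; exact hb⟩

lemma fact5 (x y : RR K q) (h : Nm (hh K q) * x = (gg K q - 1) * y) :
    ∃ a b, x = (hh K q - 1) * a + (gg K q - 1) * b := by
  obtain ⟨b, hb⟩ := sub_EE x
  obtain ⟨a, ha⟩ := fact3' (EE K q x) (by
    have := congrArg (EE K q) h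
    simpa [EE_hh, EE_gg, map_Nm] using this)
  exact ⟨a, b, by rw [← ha]; exact hb⟩

lemma fact6 (x : RR K q) (h : aug K q x = 0) :
    ∃ a b, x = (gg K q - 1) * a + (hh K q - 1) * b := by
  obtain ⟨a, ha⟩ := sub_EE x
  obtain ⟨b, hb⟩ := sub_EE (SW K q (EE K q x))
  have h1 : ∀ x : RR K q, EE K q (SW K q (EE K q x)) = bs K 0 0 (aug K q x) := by
    intro x
    induction x using bs_induction with
    | h0 => simp [bs]
    | ha x y hx hy => simp [hx, hy, bs]
    | hb a b r => simp [EE_bs, SW_bs, aug_bs]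
  rw [h1, h] at hb
  refine ⟨a, SW K q b, ?_⟩
  have := congrArg (SW K q) hb
  simp [SW_SW, SW_gg, bs] at this
  rw [← this, add_comm]; exact ha

section phi
variable (p : ℕ)
/-- the automorphism of the group algebra -/
def FF (K : Type) [Field K] {q : ℕ} (φ : GG q →* GG q) : RR K q →+* RR K q := mapDomainRingHom K φ

/-- w -/
def ww (K : Type) [Field K] (q p : ℕ) : RR K q := gg K q * ∑ l ∈ Finset.range p, hh K q ^ l
/-- e -/
def ee (K : Type) [Field K] (q p : ℕ) : RR K q :=
  - ∑ i ∈ Finset.range q, gg K q ^ i * ∑ l ∈ Finset.range (p * i), hh K q ^ l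

variable {p}

lemma geom_mul (m : ℕ) :
    ∑ l ∈ Finset.range (m * q), hh K q ^ l = (m : RR K q) * ∑ l ∈ Finset.range q, hh K q ^ l := by
  induction m with
  | zero => simp
  | succ m ih =>
    rw [Nat.succ_mul, Finset.sum_range_add, ih]
    have : ∀ l, hh K q ^ (m * q + l) = hh K q ^ l := by
      intro l
      rw [pow_add, mul_comm m q, pow_mul, hh_pow_q, one_pow, one_mul]
    simp only [this]; push_cast; ring

variable [CharP K p] (φ : GG q →* GG q)

lemma phi1 (hg : FF K φ (gg K q) = gg K q * hh K q ^ p) : FF K φ (gg K q - 1) = (gg K q - 1) + (hh K q - 1) * ww K q p := by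
  have := mul_geom_sum (hh K q) p
  rw [map_sub, map_one, hg, ww]
  linear_combination -gg K q * this

lemma phi_Nm (hg : FF K φ (gg K q) = gg K q * hh K q ^ p) : FF K φ (Nm (gg K q)) = ∑ i ∈ Finset.range q, gg K q ^ i * hh K q ^ (p * i) := by
  rw [map_Nm, hg, Nm]
  refine Finset.sum_congr rfl fun i _ => ?_
  rw [mul_pow, pow_mul]

lemma phi2 (hg : FF K φ (gg K q) = gg K q * hh K q ^ p) : FF K φ (Nm (gg K q)) = Nm (gg K q) - (hh K q - 1) * ee K q p := by
  rw [phi_Nm φ hg, Nm, ee, mul_neg, sub_neg_eq_add, Finset.mul_sum, ← Finset.sum_add_distrib]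
  refine Finset.sum_congr rfl fun i _ => ?_
  have := mul_geom_sum (hh K q) (p * i)
  linear_combination -gg K q ^ i * this

lemma phi3 (hg : FF K φ (gg K q) = gg K q * hh K q ^ p) : ww K q p * FF K φ (Nm (gg K q)) = (gg K q - 1) * ee K q p := by
  rw [phi_Nm φ hg]
  have tel := Finset.sum_range_sub
    (fun i => gg K q ^ i * ∑ l ∈ Finset.range (p * i), hh K q ^ l) q
  have hz : ∑ l ∈ Finset.range (p * q), hh K q ^ l = 0 := by
    have hp : (p : RR K q) = 0 := by
      have : (p : RR K q) = algebraMap K (RR K q) (p : K) := (map_natCast (algebraMap K (RR K q)) p).symm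
      rw [this, CharP.cast_eq_zero, map_zero]
    rw [geom_mul, hp, zero_mul]
  simp only [hz, mul_zero, Finset.range_zero, Finset.sum_empty, sub_self] at tel
  have : ∀ i, gg K q ^ (i + 1) * ∑ l ∈ Finset.range (p * (i+1)), hh K q ^ l
       - gg K q ^ i * ∑ l ∈ Finset.range (p * i), hh K q ^ l =
      (gg K q - 1) * (gg K q ^ i * ∑ l ∈ Finset.range (p * i), hh K q ^ l) +
        ww K q p * (gg K q ^ i * hh K q ^ (p * i)) := by
    intro i
    rw [Nat.mul_succ, Finset.sum_range_add, ww, pow_succ]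
    simp only [pow_add, ← Finset.mul_sum]
    ring
  simp only [this, Finset.sum_add_distrib, ← Finset.mul_sum] at tel
  rw [ee]
  linear_combination tel

lemma aug_gg : aug K q (gg K q) = 1 := by simp [gg, aug_bs]
lemma aug_hh : aug K q (hh K q) = 1 := by simp [hh, aug_bs]

lemma aug_ww : aug K q (ww K q p) = 0 := by simp [ww, aug_gg, aug_hh]
lemma aug_ee : aug K q (ee K q p) = 0 := by simp [ee, aug_gg, aug_hh]

lemma aug_FF (x : RR K q) : aug K q (FF K φ x) = aug K q x := by
  induction x using bs_induction with
  | h0 => simp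
  | ha x y hx hy => simp [hx, hy]
  | hb a b r => simp [FF, aug, bs]

end phi
end grp
end KoszulCalc

open CategoryTheory groupCohomology
set_option linter.unusedSectionVars false
namespace KoszulCalc
section res
variable (q : ℕ) [NeZero q] (K : Type) [Field K]

/-- the representation on a finite power of the group algebra -/
def rhoP (n : ℕ) : Representation K (GG q) (Fin n → RR K q) where
  toFun g :=
    { toFun := fun z i => MonoidAlgebra.single g 1 * z i
      map_add' := fun x y => by funext i; simp [mul_add]
      map_smul' := fun r x => by funext i; simp }
  map_one' := by
    refine LinearMap.ext fun z => funext fun i => ?_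
    exact one_mul _
  map_mul' g h := by
    refine LinearMap.ext fun z => funext fun i => ?_
    change MonoidAlgebra.single (g * h) (1 : K) * z i =
      MonoidAlgebra.single g 1 * (MonoidAlgebra.single h 1 * z i)
    rw [← mul_assoc, MonoidAlgebra.single_mul_single, mul_one]

lemma rhoP_apply (n : ℕ) (g : GG q) (z : Fin n → RR K q) :
    rhoP q K n g z = fun i => MonoidAlgebra.single g 1 * z i := rfl

/-- terms of the resolution -/
def PX (n : ℕ) : Rep K (GG q) := Rep.of (rhoP q K (n + 1))

instance PX_proj (n : ℕ) : Projective (PX q K n) := by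
  refine Projective.of_iso (P := Rep.free K (GG q) (Fin (n + 1))) (Rep.mkIso ?_) inferInstance
  refine Representation.Equiv.mk
    (Finsupp.linearEquivFunOnFinite K (MonoidAlgebra K (GG q)) (Fin (n + 1))) ?_
  intro g
  refine LinearMap.ext fun z => funext fun i => ?_
  change ((Representation.free K (GG q) (Fin (n + 1))) g z) i = MonoidAlgebra.single g 1 * z i
  induction z using Finsupp.induction_linear with
  | zero => simp
  | add x y hx hy => simp [hx, hy, mul_add]
  | single a x =>
    induction x using MonoidAlgebra.induction_linear with
    | zero => simp
    | add x y hx hy => simp only [Finsupp.single_add, map_add, Finsupp.add_apply, hx, hy, mul_add]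
    | single m r =>
      rw [Representation.free_single_single]
      by_cases h : a = i
      · subst h; simp [MonoidAlgebra.single_mul_single]
      · simp [Finsupp.single_apply, h]

/-- the differential as a linear map -/
def dL (n : ℕ) : (Fin (n + 2) → RR K q) →ₗ[K] (Fin (n + 1) → RR K q) where
  toFun := dP (gg K q - 1) (Nm (gg K q)) (hh K q - 1) (Nm (hh K q)) n
  map_add' x y := by funext i; simp only [dP, ex_add, Pi.add_apply]; ring
  map_smul' r x := by
    funext i
    have : r • x = fun j => algebraMap K (RR K q) r * x j := by
      funext j; rw [Pi.smul_apply, Algebra.smul_def]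
    rw [this]
    simp only [dP, ex_mul, Pi.smul_apply, RingHom.id_apply, Algebra.smul_def]; ring

lemma dL_comm (n : ℕ) (g : GG q) :
    dL q K n ∘ₗ rhoP q K (n + 2) g = rhoP q K (n + 1) g ∘ₗ dL q K n := by
  refine LinearMap.ext fun z => funext fun i => ?_
  rw [LinearMap.comp_apply, LinearMap.comp_apply, rhoP_apply, rhoP_apply]
  simp only [dL, LinearMap.coe_mk, AddHom.coe_mk, dP, ex_mul]
  generalize (MonoidAlgebra.single g 1 : RR K q) = u
  ring

/-- the differential as intertwining map -/
def dI (n : ℕ) : (rhoP q K (n + 2)).IntertwiningMap (rhoP q K (n + 1)) :=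
  { toLinearMap := dL q K n, isIntertwining' := dL_comm q K n }

/-- the differential -/
def PD (n : ℕ) : PX q K (n + 1) ⟶ PX q K n := Rep.ofHom (dI q K n)

lemma PD_apply (n : ℕ) (z : Fin (n + 2) → RR K q) : (PD q K n).hom z =
    dP (gg K q - 1) (Nm (gg K q)) (hh K q - 1) (Nm (hh K q)) n z := rfl

lemma PD_PD (n : ℕ) : PD q K (n + 1) ≫ PD q K n = 0 := by
  refine Rep.hom_ext (Representation.IntertwiningMap.ext (LinearMap.ext fun z => ?_))
  exact dP_dP (mul_Nm _ gg_pow_q) (mul_Nm _ hh_pow_q) n z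

/-- the complex -/
def PC : ChainComplex (Rep K (GG q)) ℕ := ChainComplex.of (PX q K) (PD q K) (PD_PD q K)

/-- augmentation linear -/
def augL : (Fin 1 → RR K q) →ₗ[K] K where
  toFun z := aug K q (z 0)
  map_add' x y := by simp
  map_smul' r x := by simp [aug]

/-- augmentation intertwining -/
def augI : (rhoP q K 1).IntertwiningMap (Representation.trivial K (GG q) K) where
  toLinearMap := augL q K
  isIntertwining' g := by
    refine LinearMap.ext fun z => ?_
    change aug K q (MonoidAlgebra.single g 1 * z 0) = aug K q (z 0)
    rw [map_mul, show MonoidAlgebra.single g (1 : K) = bs K g.toAdd.1 g.toAdd.2 1 from rfl, aug_bs,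
      one_mul]

/-- augmentation -/
def augP : PX q K 0 ⟶ Rep.trivial K (GG q) K := Rep.ofHom (augI q K)

lemma augP_apply (z : Fin 1 → RR K q) : (augP q K).hom z = aug K q (z 0) := rfl

lemma PD_augP : PD q K 0 ≫ augP q K = 0 := by
  refine Rep.hom_ext (Representation.IntertwiningMap.ext (LinearMap.ext fun z => ?_))
  change aug K q (dP (gg K q - 1) (Nm (gg K q)) (hh K q - 1) (Nm (hh K q)) 0 z 0) = 0
  simp [dP, per, aug_gg, aug_hh]

lemma PC_d (n : ℕ) : (PC q K).d (n + 1) n = PD q K n := ChainComplex.of_d _ _ _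

/-- augmentation chain map -/
def Pπ : PC q K ⟶ (ChainComplex.single₀ _).obj (Rep.trivial K (GG q) K) :=
  ((PC q K).toSingle₀Equiv _).symm ⟨augP q K, by
    rw [PC_d]; exact PD_augP q K⟩

lemma Pπ_f0 : (Pπ q K).f 0 = augP q K := by
  simp [Pπ]; rfl

lemma exact_of {S : ShortComplex (Rep K (GG q))}
    (h : ∀ z : S.X₂, S.g.hom z = 0 → ∃ y, S.f.hom y = z) : S.Exact := by
  apply (forget₂ (Rep K (GG q)) (ModuleCat K)).reflects_exact_of_faithful
  rw [ShortComplex.moduleCat_exact_iff]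
  exact h

lemma Pπ_quasi : QuasiIso (Pπ q K) where
  quasiIsoAt m := by
    induction m with
    | zero =>
      rw [ChainComplex.quasiIsoAt₀_iff, ShortComplex.quasiIso_iff_of_zeros' _ rfl rfl rfl]
      constructor
      · apply exact_of
        intro z hz
        change (Fin 1 → RR K q) at z
        change ((Pπ q K).f 0).hom z = 0 at hz
        rw [Pπ_f0] at hz
        obtain ⟨a, b, hab⟩ := fact6 (z 0) hz
        change ∃ y, ((PC q K).d 1 0).hom y = z
        rw [PC_d]
        refine ⟨(![b, a] : Fin 2 → RR K q), ?_⟩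
        funext i
        obtain rfl : i = 0 := Fin.fin_one_eq_zero i
        rw [hab]
        change dP (gg K q - 1) (Nm (gg K q)) (hh K q - 1) (Nm (hh K q)) 0 _ 0 = _
        simp [dP, per, ex]
      · rw [Rep.epi_iff_surjective]
        intro x
        change K at x
        refine ⟨(fun _ => bs K 0 0 x : Fin 1 → RR K q), ?_⟩
        change ((Pπ q K).f 0).hom _ = _
        rw [Pπ_f0]
        exact aug_bs (K := K) _ _ x
    | succ m _ =>
      rw [quasiIsoAt_iff_exactAt' (hL := ChainComplex.exactAt_succ_single_obj ..),
          HomologicalComplex.exactAt_iff' _ (m + 2) (m + 1) m (by simp) (by simp)]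
      apply exact_of
      change ∀ z, ((PC q K).d (m+1) m).hom z = 0 → ∃ y, ((PC q K).d (m+2) (m+1)).hom y = z
      rw [PC_d, PC_d]
      intro z hz
      exact dP_exact (mul_Nm _ hh_pow_q) fact2 fact3 fact4 fact5 m z hz

/-- the small resolution -/
def PR : ProjectiveResolution (Rep.trivial K (GG q) K) where
  complex := PC q K
  projective n := PX_proj q K n
  π := Pπ q K
  quasiIso := Pπ_quasi q K

end res
end KoszulCalc

open CategoryTheory groupCohomology
set_option linter.unusedSectionVars false
namespace KoszulCalc
section gen
variable (K : Type) [Field K] {H : Type} [Group H] (φ : H ≃* H)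

/-- restriction functor -/
abbrev RF (K : Type) [Field K] {H : Type} [Group H] (φ : H ≃* H) : Rep.{0} K H ⥤ Rep.{0} K H :=
  Rep.resFunctor φ.toMonoidHom

/-- trivial representation -/
abbrev TT (K : Type) [Field K] (H : Type) [Group H] : Rep K H := Rep.trivial K H K

/-- identity -/
def tau : TT K H ⟶ (RF K φ).obj (TT K H) := Rep.ofHom
  { toLinearMap := LinearMap.id, isIntertwining' := fun _ => rfl }
/-- identity -/
def tau' : (RF K φ).obj (TT K H) ⟶ TT K H := Rep.ofHom
  { toLinearMap := LinearMap.id, isIntertwining' := fun _ => rfl }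

instance RF_full : (RF K φ).Full := Rep.full_res _ φ.surjective

instance RF_essSurj : (RF K φ).EssSurj where
  mem_essImage B := by
    refine ⟨(RF K φ.symm).obj B, ⟨?_⟩⟩
    refine
      { hom := Rep.ofHom { toLinearMap := LinearMap.id, isIntertwining' := fun g => ?_ }
        inv := Rep.ofHom { toLinearMap := LinearMap.id, isIntertwining' := fun g => ?_ } }
    · refine LinearMap.ext fun x => ?_
      change B.ρ (φ.symm (φ g)) x = B.ρ g x
      rw [φ.symm_apply_apply]
    · refine LinearMap.ext fun x => ?_
      change B.ρ g x = B.ρ (φ.symm (φ g)) x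
      rw [φ.symm_apply_apply]

instance RF_equiv : (RF K φ).IsEquivalence where

instance RF_ppo : (RF K φ).PreservesProjectiveObjects := inferInstance

/-- map on bar resolution -/
def phiBX (n : ℕ) : Rep.free K H (Fin n → H) ⟶ (RF K φ).obj (Rep.free K H (Fin n → H)) :=
  Rep.freeLift K H _ (fun x => (Finsupp.single (fun i => φ (x i)) (MonoidAlgebra.single 1 1) :
    (Fin n → H) →₀ MonoidAlgebra K H))

lemma phiBX_single (n : ℕ) (x : Fin n → H) (h : H) (r : K) :
    (phiBX K φ n).hom (Finsupp.single x (MonoidAlgebra.single h r)) =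
      (Finsupp.single (fun i => φ (x i)) (MonoidAlgebra.single (φ h) r) :
        (Fin n → H) →₀ MonoidAlgebra K H) := by
  have h1 := Representation.freeLift_single_single
    ((Representation.free K H (Fin n → H)).comp φ.toMonoidHom) x h r
    (fun x : Fin n → H => (Finsupp.single (fun i => φ (x i)) (MonoidAlgebra.single 1 1) :
      (Fin n → H) →₀ MonoidAlgebra K H))
  refine Eq.trans h1 ?_
  have h2 := Representation.free_single_single (k := K) (φ h) (1 : H) (fun i => φ (x i)) (1 : K)
  refine (congrArg (fun z => r • z) h2).trans ?_
  rw [mul_one, Finsupp.smul_single, MonoidAlgebra.smul_single, smul_eq_mul, mul_one]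

lemma phiBX_comm (n : ℕ) : phiBX K φ (n + 1) ≫ (RF K φ).map (Rep.barComplex.d K H n) =
    Rep.barComplex.d K H n ≫ phiBX K φ n := by
  refine Rep.free_ext _ _ _ _ _ fun x => ?_
  change (Rep.barComplex.d K H n).hom ((phiBX K φ (n+1)).hom _) =
    (phiBX K φ n).hom ((Rep.barComplex.d K H n).hom _)
  rw [phiBX_single, map_one, Rep.barComplex.d_single, Rep.barComplex.d_single, map_add, map_sum,
    phiBX_single]
  congr 1
  refine Finset.sum_congr rfl fun j _ => ?_
  rw [phiBX_single, map_one]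
  congr 1
  exact (comp_contractNth φ.toMonoidHom j x).symm

/-- chain map on the bar complex -/
def phiB : Rep.barComplex K H ⟶ ((RF K φ).mapHomologicalComplex _).obj (Rep.barComplex K H) where
  f n := phiBX K φ n
  comm' i j hij := by
    obtain rfl : j + 1 = i := hij
    rw [Functor.mapHomologicalComplex_obj_d, Rep.barComplex.d_def]
    exact phiBX_comm K φ j

lemma phiB_f (n : ℕ) : (phiB K φ).f n = phiBX K φ n := rfl

lemma phiB_zero (g : Rep.free K H (Fin 0 → H) ⟶ TT K H) :
    phiBX K φ 0 ≫ (RF K φ).map g = g ≫ tau K φ := by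
  refine Rep.free_ext _ _ _ _ _ fun x => ?_
  change g.hom ((phiBX K φ 0).hom _) = g.hom _
  rw [phiBX_single, map_one]
  congr 2
  exact Subsingleton.elim _ _

lemma homot {V : Type 1} [Category.{0} V] [Preadditive V] {C D : ChainComplex V ℕ} {g h : C ⟶ D}
    (e : Homotopy g h) (s : ℕ) {T : V} (f : D.X s ⟶ T) (hf : D.d (s + 1) s ≫ f = 0) :
    ∃ c, g.f s ≫ f = h.f s ≫ f + C.d s ((ComplexShape.down ℕ).next s) ≫ c := by
  refine ⟨e.hom _ s ≫ f, ?_⟩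
  rw [e.comm s, prevD_eq e.hom (show (ComplexShape.down ℕ).Rel (s + 1) s from rfl)]
  simp [hf, dNext]
  abel

end gen

lemma alg_final {V : Type 1} [Category.{0} V] [Preadditive V] (F : V ⥤ V) [F.Additive]
    {X Y W T : V} (a : X ⟶ F.obj X) (b : Y ⟶ F.obj Y) (d : X ⟶ Y) (al : X ⟶ W) (f' : W ⟶ T)
    (f : X ⟶ T) (ph : W ⟶ F.obj W) (tau' : F.obj T ⟶ T) (c1 c2 : Y ⟶ T)
    (h1 : al ≫ f' = f + d ≫ c1)
    (h2 : (a ≫ F.map al) ≫ F.map f' ≫ tau' = (al ≫ ph) ≫ F.map f' ≫ tau' + d ≫ c2)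
    (e3 : ph ≫ F.map f' ≫ tau' = f') (e5 : a ≫ F.map d = d ≫ b) :
    ∃ c, a ≫ F.map f ≫ tau' - f = d ≫ c := by
  refine ⟨c1 + c2 - b ≫ F.map c1 ≫ tau', ?_⟩
  have e4 := congrArg (fun z => a ≫ F.map z ≫ tau') h1
  simp only [Functor.map_comp, Functor.map_add, Preadditive.add_comp, Preadditive.comp_add,
    Category.assoc] at e4 h2
  rw [h2, e3, h1, reassoc_of% e5] at e4
  rw [Preadditive.comp_sub, Preadditive.comp_add, sub_eq_iff_eq_add, sub_add_eq_add_sub, eq_sub_iff_add_eq, ← e4]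
  abel

lemma zero_aux1 {V : Type 1} [Category.{0} V] (F : V ⥤ V) {X W T : V}
    (a : X ⟶ F.obj X) (al : X ⟶ W) (ph : W ⟶ F.obj W) (pP : W ⟶ T) (pQ : X ⟶ T)
    (tau : T ⟶ F.obj T) (h : al ≫ pP = pQ) (h0 : a ≫ F.map pQ = pQ ≫ tau) :
    (a ≫ F.map al) ≫ F.map pP ≫ 𝟙 (F.obj T) = pQ ≫ tau := by
  rw [Category.comp_id, Category.assoc, ← F.map_comp, h, h0]

lemma zero_aux2 {V : Type 1} [Category.{0} V] (F : V ⥤ V) {X W T : V}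
    (a : X ⟶ F.obj X) (al : X ⟶ W) (ph : W ⟶ F.obj W) (pP : W ⟶ T) (pQ : X ⟶ T)
    (tau : T ⟶ F.obj T) (h : al ≫ pP = pQ) (h0 : ph ≫ F.map pP = pP ≫ tau) :
    (al ≫ ph) ≫ F.map pP ≫ 𝟙 (F.obj T) = pQ ≫ tau := by
  rw [Category.comp_id, Category.assoc, h0, ← Category.assoc, h]

lemma main_abs {V : Type 1} [Category.{0} V] [Abelian V] (F : V ⥤ V) [F.Additive]
    [F.PreservesProjectiveObjects] [F.PreservesHomology] {T : V} (P Q : ProjectiveResolution T)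
    (tau : T ⟶ F.obj T) (tau' : F.obj T ⟶ T)
    (phiP : P.complex ⟶ (F.mapHomologicalComplex _).obj P.complex)
    (phiQ : Q.complex ⟶ (F.mapHomologicalComplex _).obj Q.complex)
    (h0P : phiP.f 0 ≫ F.map (P.π.f 0) = P.π.f 0 ≫ tau)
    (h0Q : phiQ.f 0 ≫ F.map (Q.π.f 0) = Q.π.f 0 ≫ tau)
    (hinv : ∀ s (f : P.complex.X s ⟶ T), phiP.f s ≫ F.map f ≫ tau' = f)
    (s : ℕ) (f : Q.complex.X s ⟶ T)
    (hf : Q.complex.d (s + 1) s ≫ f = 0) :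
    ∃ c, phiQ.f s ≫ F.map f ≫ tau' - f =
      Q.complex.d s ((ComplexShape.down ℕ).next s) ≫ c := by
  let E := ProjectiveResolution.homotopyEquiv Q P
  obtain ⟨α, hαE⟩ : ∃ α : Q.complex ⟶ P.complex, α = E.hom := ⟨_, rfl⟩
  obtain ⟨β, hβE⟩ : ∃ β : P.complex ⟶ Q.complex, β = E.inv := ⟨_, rfl⟩
  have hα : α ≫ P.π = Q.π := by rw [hαE]; exact ProjectiveResolution.homotopyEquiv_hom_π Q P
  have hf' : P.complex.d (s + 1) s ≫ (β.f s ≫ f) = 0 := by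
    rw [← β.comm_assoc, hf, Limits.comp_zero]
  obtain ⟨c1, hc1⟩ := homot E.homotopyHomInvId s f hf
  rw [← hαE, ← hβE] at hc1
  have hj : ((HomologicalComplex.singleMapHomologicalComplex F (ComplexShape.down ℕ) 0).hom.app T).f 0
      = 𝟙 (F.obj T) := by
    rw [HomologicalComplex.singleMapHomologicalComplex_hom_app_self]
    change F.map (𝟙 T) ≫ 𝟙 (F.obj T) = _
    rw [F.map_id, Category.id_comp]
  have hα0 : α.f 0 ≫ P.π.f 0 = Q.π.f 0 := by rw [← hα]; rfl
  have hlift : Homotopy (phiQ ≫ (F.mapHomologicalComplex _).map α) (α ≫ phiP) := by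
    refine ProjectiveResolution.liftHomotopy (P := Q) (Q := F.mapProjectiveResolution P)
      tau _ _ ?_ ?_
    · apply HomologicalComplex.to_single_hom_ext
      dsimp [Functor.mapProjectiveResolution]
      rw [hj, ChainComplex.single₀_map_f_zero]
      exact zero_aux1 F (phiQ.f 0) (α.f 0) (phiP.f 0) (P.π.f 0) (Q.π.f 0) tau hα0 h0Q
    · apply HomologicalComplex.to_single_hom_ext
      dsimp [Functor.mapProjectiveResolution]
      rw [hj, ChainComplex.single₀_map_f_zero]
      exact zero_aux2 F (phiQ.f 0) (α.f 0) (phiP.f 0) (P.π.f 0) (Q.π.f 0) tau hα0 h0P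
  obtain ⟨c2, hc2⟩ := homot hlift s (F.map (β.f s ≫ f) ≫ tau') (by
    change F.map (P.complex.d (s + 1) s) ≫ F.map (β.f s ≫ f) ≫ tau' = 0
    rw [← F.map_comp_assoc, hf', F.map_zero, Limits.zero_comp])
  exact alg_final F (phiQ.f s) (phiQ.f _) (Q.complex.d s ((ComplexShape.down ℕ).next s))
    (α.f s) (β.f s ≫ f) f (phiP.f s) tau' c1 c2 (by simpa using hc1) hc2 (hinv s _)
    (phiQ.comm s ((ComplexShape.down ℕ).next s))
end KoszulCalc

open CategoryTheory groupCohomology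
set_option linter.unusedSectionVars false
namespace KoszulCalc
section res2
variable {q : ℕ} {K : Type} [Field K] {p : ℕ} (φ : GG q ≃* GG q)

lemma FF_single (m : GG q) (r : K) : FF K φ.toMonoidHom (MonoidAlgebra.single m r) =
    MonoidAlgebra.single (φ m) r := by
  simp [FF]

lemma FF_smul (r : K) (x : RR K q) : FF K φ.toMonoidHom (r • x) = r • FF K φ.toMonoidHom x := by
  rw [Algebra.smul_def, map_mul, Algebra.smul_def]
  congr 1
  rw [MonoidAlgebra.coe_algebraMap]
  simp only [Function.comp_apply, FF_single, map_one]

/-- abbreviation -/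
def phL (K : Type) [Field K] (p : ℕ) {q : ℕ} (φ : GG q ≃* GG q) (n : ℕ) :
    (Fin (n + 1) → RR K q) →ₗ[K] (Fin (n + 1) → RR K q) where
  toFun := phiP (FF K φ.toMonoidHom) (ww K q p) (ee K q p) n
  map_add' x y := by
    funext i; simp only [phiP, ex_add, Pi.add_apply, map_add]; ring
  map_smul' r x := by
    funext i
    have : r • x = fun j => algebraMap K (RR K q) r * x j := by
      funext j; rw [Pi.smul_apply, Algebra.smul_def]
    have h2 : ex (r • x) (i + 1) = r • ex x (i + 1) := by
      rw [this, ex_mul, Algebra.smul_def]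
    simp only [phiP, h2, FF_smul, Pi.smul_apply, RingHom.id_apply, smul_add, mul_smul_comm]

lemma phL_apply (n : ℕ) (z : Fin (n + 1) → RR K q) : phL K p φ n z =
  phiP (FF K φ.toMonoidHom) (ww K q p) (ee K q p) n z := rfl

variable [NeZero q]

lemma phL_comm (n : ℕ) (g : GG q) : phL K p φ n ∘ₗ rhoP q K (n + 1) g =
    (rhoP q K (n + 1)).comp φ.toMonoidHom g ∘ₗ phL K p φ n := by
  refine LinearMap.ext fun z => funext fun i => ?_
  rw [LinearMap.comp_apply, LinearMap.comp_apply, MonoidHom.comp_apply, rhoP_apply, rhoP_apply,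
    phL_apply, phL_apply]
  simp only [phiP, ex_mul, map_mul, FF_single]
  change _ = MonoidAlgebra.single (φ g) 1 * _
  generalize (MonoidAlgebra.single (φ g) 1 : RR K q) = u
  ring

/-- intertwining -/
def phI (K : Type) [Field K] (p : ℕ) {q : ℕ} [NeZero q] (φ : GG q ≃* GG q) (n : ℕ) :
    (rhoP q K (n + 1)).IntertwiningMap ((rhoP q K (n + 1)).comp φ.toMonoidHom) :=
  { toLinearMap := phL K p φ n, isIntertwining' := phL_comm φ n }

/-- the map on the small resolution -/
def phX (K : Type) [Field K] (p : ℕ) {q : ℕ} [NeZero q] (φ : GG q ≃* GG q) (n : ℕ) :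
    PX q K n ⟶ (RF K φ).obj (PX q K n) := Rep.ofHom (phI K p φ n)

lemma phX_apply (n : ℕ) (z : Fin (n + 1) → RR K q) : (phX K p φ n).hom z =
  phiP (FF K φ.toMonoidHom) (ww K q p) (ee K q p) n z := rfl

variable [CharP K p]

lemma phX_comm (hg : FF K φ.toMonoidHom (gg K q) = gg K q * hh K q ^ p)
    (hh' : FF K φ.toMonoidHom (hh K q) = hh K q) (n : ℕ) :
    phX K p φ (n + 1) ≫ (RF K φ).map (PD q K n) = PD q K n ≫ phX K p φ n := by
  refine Rep.hom_ext (Representation.IntertwiningMap.ext (LinearMap.ext fun z => ?_))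
  change (Fin (n + 2) → RR K q) at z
  exact phiP_comm (FF K φ.toMonoidHom) (ww K q p) (ee K q p) (phi1 _ hg) (phi2 _ hg) (phi3 _ hg)
    (by rw [map_sub, map_one, hh']) (by rw [map_Nm, hh']) n z

def phC (hg : FF K φ.toMonoidHom (gg K q) = gg K q * hh K q ^ p)
    (hh' : FF K φ.toMonoidHom (hh K q) = hh K q) :
    PC q K ⟶ ((RF K φ).mapHomologicalComplex _).obj (PC q K) where
  f n := phX K p φ n
  comm' i j hij := by
    obtain rfl : j + 1 = i := hij
    rw [Functor.mapHomologicalComplex_obj_d, PC_d]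
    exact phX_comm φ hg hh' j

lemma phX_zero : phX K p φ 0 ≫ (RF K φ).map (augP q K) = augP q K ≫ tau K φ := by
  refine Rep.hom_ext (Representation.IntertwiningMap.ext (LinearMap.ext fun z => ?_))
  change (Fin 1 → RR K q) at z
  change aug K q (phiP (FF K φ.toMonoidHom) (ww K q p) (ee K q p) 0 z 0) = aug K q (z 0)
  simp [phiP, ex, aug_FF]

lemma lin_aug (l : RR K q →ₗ[K] K)
    (hl : ∀ (g : GG q) x, l (MonoidAlgebra.single g 1 * x) = l x) (x : RR K q) :
    l x = aug K q x * l 1 := by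
  induction x using bs_induction with
  | h0 => simp
  | ha x y hx hy => rw [map_add, hx, hy, map_add, add_mul]
  | hb a b r =>
    have h1 : bs K a b r = MonoidAlgebra.single (Multiplicative.ofAdd (a, b)) 1 * (r • 1) := by
      rw [mul_smul_comm, mul_one, MonoidAlgebra.smul_single, smul_eq_mul, mul_one]; rfl
    rw [aug_bs, h1, hl, map_smul, smul_eq_mul]

lemma hom_aug (n : ℕ) (f : PX q K n ⟶ TT K (GG q)) (z z' : Fin (n + 1) → RR K q)
    (h : ∀ i, aug K q (z i) = aug K q (z' i)) : f.hom z = f.hom z' := by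
  let L : (Fin (n + 1) → RR K q) →ₗ[K] K := f.hom.toLinearMap
  have hL : ∀ (g : GG q) (z : Fin (n + 1) → RR K q), L (rhoP q K (n + 1) g z) = L z :=
    fun g z => Rep.hom_comm_apply f g z
  have key : ∀ z : Fin (n + 1) → RR K q, L z = ∑ i, aug K q (z i) * L (Pi.single i 1) := by
    intro z
    conv_lhs => rw [← Finset.univ_sum_single z, map_sum]
    refine Finset.sum_congr rfl fun i _ => ?_
    refine lin_aug (L ∘ₗ LinearMap.single K (fun _ => RR K q) i) (fun g x => ?_) (z i)
    refine Eq.trans ?_ (hL g (Pi.single i x))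
    refine congrArg L (funext fun j => ?_)
    rw [rhoP_apply]
    by_cases hj : j = i
    · subst hj; simp
    · simp [Pi.single_eq_of_ne hj]
  change L z = L z'
  rw [key, key]
  simp only [h]

lemma phX_inv (n : ℕ) (f : PX q K n ⟶ TT K (GG q)) :
    phX K p φ n ≫ (RF K φ).map f ≫ tau' K φ = f := by
  refine Rep.hom_ext (Representation.IntertwiningMap.ext (LinearMap.ext fun z => ?_))
  change (Fin (n + 1) → RR K q) at z
  change f.hom (phiP (FF K φ.toMonoidHom) (ww K q p) (ee K q p) n z) = f.hom z
  refine hom_aug n f _ _ fun i => ?_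
  have hcc : ∀ i j, aug K q (cc (ww K q p) (ee K q p) i j) = 0 := by
    intro i j
    unfold cc
    split_ifs
    · simp
    · exact aug_ww
    · exact aug_ee
  rw [phiP, map_add, map_mul, hcc, zero_mul, add_zero, aug_FF]

lemma bar_result (hg : FF K φ.toMonoidHom (gg K q) = gg K q * hh K q ^ p)
    (hh' : FF K φ.toMonoidHom (hh K q) = hh K q) (s : ℕ)
    (f : (Rep.barComplex K (GG q)).X s ⟶ TT K (GG q))
    (hf : (Rep.barComplex K (GG q)).d (s + 1) s ≫ f = 0) :
    ∃ c, phiBX K φ s ≫ (RF K φ).map f ≫ tau' K φ - f =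
      (Rep.barComplex K (GG q)).d s ((ComplexShape.down ℕ).next s) ≫ c :=
  main_abs (RF K φ) (PR q K) (Rep.barResolution K (GG q)) (tau K φ) (tau' K φ)
    (phC φ hg hh') (phiB K φ) (by
      have : (PR q K).π.f 0 = augP q K := Pπ_f0 q K
      rw [this]
      exact phX_zero φ) (phiB_zero K φ _) (fun n f => phX_inv φ n f) s f hf

end res2
end KoszulCalc

open CategoryTheory groupCohomology
set_option linter.unusedSectionVars false
namespace KoszulCalc
section coch
variable (K : Type) [Field K] {H : Type} [Group H] (φ : H ≃* H)

/-- homs out of the free module are functions -/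
abbrev ev (K : Type) [Field K] (H : Type) [Group H] (n : ℕ) :
    (Rep.free K H (Fin n → H) ⟶ TT K H) ≃ₗ[K] ((Fin n → H) → K) :=
  Rep.freeLiftLEquiv K H (Fin n → H) (TT K H)

lemma ev_apply (n : ℕ) (f : Rep.free K H (Fin n → H) ⟶ TT K H) (x : Fin n → H) :
    ev K H n f x = f.hom (Finsupp.single x (MonoidAlgebra.single 1 1) :
        (Fin n → H) →₀ MonoidAlgebra K H) := rfl

lemma d_ev (n : ℕ) (f : Rep.free K H (Fin n → H) ⟶ TT K H) :
    (inhomogeneousCochains.d (TT K H) n).hom (ev K H n f) =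
      ev K H (n + 1) (Rep.barComplex.d K H n ≫ f) := by
  have h := inhomogeneousCochains.d_eq (A := TT K H) (n := n)
  have h2 := congrArg (fun z => z.hom (ev K H n f)) h
  refine h2.trans ?_
  change ev K H (n + 1) ((((Rep.barComplex K H).linearYonedaObj K (TT K H)).d n (n + 1)).hom
    ((ev K H n).symm (ev K H n f))) = _
  rw [LinearEquiv.symm_apply_apply]
  change ev K H (n + 1) ((Rep.barComplex K H).d (n + 1) n ≫ f) = _
  rw [Rep.barComplex.d_def]

lemma precomp_ev (n : ℕ) (f : Rep.free K H (Fin n → H) ⟶ TT K H) :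
    cochainPrecomp K φ.toMonoidHom n (ev K H n f) =
      ev K H n (phiBX K φ n ≫ (RF K φ).map f ≫ tau' K φ) := by
  funext x
  rw [cochainPrecomp_apply, ev_apply, ev_apply]
  change _ = f.hom ((phiBX K φ n).hom _)
  rw [phiBX_single, map_one]
  rfl

end coch
section res3
variable {q : ℕ} [NeZero q] {K : Type} [Field K] {p : ℕ} [CharP K p] (φ : GG q ≃* GG q)

lemma cochain_result (hg : FF K φ.toMonoidHom (gg K q) = gg K q * hh K q ^ p)
    (hh' : FF K φ.toMonoidHom (hh K q) = hh K q) (s : ℕ)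
    (z : (Fin s → GG q) → K)
    (hz : (inhomogeneousCochains.d (TT K (GG q)) s).hom z = 0) :
    ∃ (i : ℕ) (y : (inhomogeneousCochains (TT K (GG q))).X i),
      ((inhomogeneousCochains (TT K (GG q))).d i s).hom y =
        cochainPrecomp K φ.toMonoidHom s z - z := by
  obtain ⟨f, rfl⟩ := (ev K (GG q) s).surjective z
  rw [d_ev] at hz
  have hz' := (ev K (GG q) (s + 1)).map_eq_zero_iff.1 hz
  obtain ⟨c, hc⟩ := bar_result φ hg hh' s f (by rw [Rep.barComplex.d_def]; exact hz')
  rw [precomp_ev, ← map_sub]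
  cases s with
  | zero =>
    refine ⟨0, 0, ?_⟩
    rw [HomologicalComplex.shape _ _ _ (by simp)] at hc
    rw [map_zero, hc, Limits.zero_comp, map_zero]
  | succ s =>
    have hn : (ComplexShape.down ℕ).next (s + 1) = s := ChainComplex.next_nat_succ s
    generalize (ComplexShape.down ℕ).next (s + 1) = j at c hc hn
    subst hn
    rw [Rep.barComplex.d_def] at hc
    refine ⟨j, ev K (GG q) j c, ?_⟩
    rw [inhomogeneousCochains.d_def]
    refine (d_ev K j c).trans ?_
    exact congrArg (ev K (GG q) (j + 1)) hc.symm

lemma induced_eq_id (hg : FF K φ.toMonoidHom (gg K q) = gg K q * hh K q ^ p)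
    (hh' : FF K φ.toMonoidHom (hh K q) = hh K q) (s : ℕ) :
    cohomologyInducedMap K φ.toMonoidHom s = 𝟙 (groupCohomology (TT K (GG q)) s) := by
  let C := inhomogeneousCochains (TT K (GG q))
  change HomologicalComplex.homologyMap (cochainsMap K φ.toMonoidHom) s = 𝟙 (C.homology s)
  rw [← cancel_epi (C.homologyπ s), Category.comp_id, HomologicalComplex.homologyπ_naturality]
  refine ModuleCat.hom_ext (LinearMap.ext fun x => ?_)
  have hx : (inhomogeneousCochains.d (TT K (GG q)) s).hom ((C.iCycles s).hom x) = 0 := by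
    have h1 := congrArg (fun z => z.hom x) (C.iCycles_d s (s + 1))
    rw [inhomogeneousCochains.d_def] at h1
    exact h1
  obtain ⟨i, y, hy⟩ := cochain_result φ hg hh' s _ hx
  have h2 : (HomologicalComplex.cyclesMap (cochainsMap K φ.toMonoidHom) s).hom x - x =
      (C.toCycles i s).hom y := by
    apply (ModuleCat.mono_iff_injective (C.iCycles s)).1 inferInstance
    have h3 := congrArg (fun z => z.hom x)
      (HomologicalComplex.cyclesMap_i (cochainsMap K φ.toMonoidHom) s)
    have h4 := congrArg (fun z => z.hom y) (C.toCycles_i i s)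
    refine Eq.trans ?_ (hy.symm.trans h4.symm)
    refine (map_sub (C.iCycles s).hom _ _).trans ?_
    exact congrArg (fun z => z - (C.iCycles s).hom x) h3
  have h5 := congrArg (fun z => z.hom y) (C.toCycles_comp_homologyπ i s)
  have h6 := congrArg (C.homologyπ s).hom h2
  rw [map_sub] at h6
  exact sub_eq_zero.1 (h6.trans h5)

lemma induced_one (s : ℕ) {H : Type} [Group H] :
    cohomologyInducedMap K (1 : Monoid.End H) s = 𝟙 (groupCohomology (TT K H) s) := by
  have : cochainsMap K (1 : Monoid.End H) = 𝟙 _ := rfl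
  change HomologicalComplex.homologyMap (cochainsMap K (1 : Monoid.End H)) s = _
  rw [this]
  exact HomologicalComplex.homologyMap_id _ _

lemma induced_mul (s : ℕ) {H : Type} [Group H] (a b : Monoid.End H) :
    cohomologyInducedMap K (a * b : Monoid.End H) s =
      cohomologyInducedMap K a s ≫ cohomologyInducedMap K b s := by
  have : cochainsMap K (a * b : Monoid.End H) = cochainsMap K a ≫ cochainsMap K b := rfl
  change HomologicalComplex.homologyMap (cochainsMap K (a * b : Monoid.End H)) s = _
  rw [this]
  exact HomologicalComplex.homologyMap_comp _ _ _

lemma sigma_pow (q i : ℕ) (a b : ZMod q) :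
    (sigmaM q ^ i : Monoid.End _) (Multiplicative.ofAdd (a, b)) =
      Multiplicative.ofAdd (a, (i : ZMod q) * a + b) := by
  induction i generalizing b with
  | zero => simp
  | succ i ih =>
    rw [pow_succ]
    change (sigmaM q ^ i : Monoid.End _) (sigmaM q (Multiplicative.ofAdd (a, b))) = _
    change (sigmaM q ^ i : Monoid.End _) (Multiplicative.ofAdd (a, a + b)) = _
    rw [ih]
    push_cast
    congr 2
    ring

lemma sigma_pow_q (q : ℕ) : (sigmaM q ^ q : Monoid.End _) = 1 := by
  refine MonoidHom.ext fun x => ?_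
  refine (sigma_pow q q x.toAdd.1 x.toAdd.2).trans ?_
  simp
  rfl

/-- the automorphism -/
def sigE (q p : ℕ) [NeZero q] : GG q ≃* GG q :=
  MonoidHom.toMulEquiv (sigmaM q ^ p) (sigmaM q ^ (p * (q - 1)))
    (by
      change sigmaM q ^ (p * (q - 1)) * sigmaM q ^ p = 1
      rw [← pow_add, ← Nat.mul_succ, Nat.succ_eq_add_one,
        Nat.sub_add_cancel (Nat.one_le_iff_ne_zero.2 (NeZero.ne q)), mul_comm, pow_mul,
        sigma_pow_q, one_pow])
    (by
      change sigmaM q ^ p * sigmaM q ^ (p * (q - 1)) = 1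
      rw [← pow_add, add_comm, ← Nat.mul_succ, Nat.succ_eq_add_one,
        Nat.sub_add_cancel (Nat.one_le_iff_ne_zero.2 (NeZero.ne q)), mul_comm, pow_mul,
        sigma_pow_q, one_pow])

lemma partA (q p : ℕ) [NeZero q] (K : Type) [Field K] [CharP K p] (s : ℕ) :
    cohomologyInducedMap K (sigmaM q ^ p : Monoid.End _) s =
      𝟙 (groupCohomology (TT K (GG q)) s) := by
  refine induced_eq_id (p := p) (sigE q p) ?_ ?_ s
  · rw [hh_pow, gg, bs_mul, bs, FF_single]
    change MonoidAlgebra.single ((sigmaM q ^ p : Monoid.End _) _) _ = _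
    rw [sigma_pow]
    simp [bs]
  · rw [hh, bs, FF_single]
    change MonoidAlgebra.single ((sigmaM q ^ p : Monoid.End _) _) _ = _
    rw [sigma_pow]
    simp
end res3

lemma periodic_sum {A : Type} [AddCommGroup A] (f : ℕ → A) (p : ℕ) (hf : ∀ i, f (i + p) = f i)
    (m : ℕ) : ∑ i ∈ Finset.range (p * m), f i = m • ∑ i ∈ Finset.range p, f i := by
  have h2 : ∀ m i, f (p * m + i) = f i := by
    intro m
    induction m with
    | zero => simp
    | succ m ih => intro i; rw [Nat.mul_succ, add_right_comm, hf, ih]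
  induction m with
  | zero => simp
  | succ m ih =>
    rw [Nat.mul_succ, Finset.sum_range_add, ih, succ_nsmul]
    simp only [h2]

lemma partB (q p N m : ℕ) [NeZero q] (hm : m ≠ 0) (hN : N = p * p ^ m)
    (K : Type) [Field K] [CharP K p] (s : ℕ) :
    ∑ i ∈ Finset.range N, cohomologyInducedMap K (sigmaM q ^ i : Monoid.End _) s = 0 := by
  have h := periodic_sum (fun i => cohomologyInducedMap K (sigmaM q ^ i : Monoid.End _) s) p
    (fun i => by
      have h1 : (sigmaM q ^ (i + p) : Monoid.End _) = sigmaM q ^ i * sigmaM q ^ p := pow_add _ _ _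
      refine (congrArg (fun a : Monoid.End (GG q) => cohomologyInducedMap K a s) h1).trans ?_
      refine (induced_mul s (sigmaM q ^ i) (sigmaM q ^ p)).trans ?_
      refine (congrArg _ (partA q p K s)).trans ?_
      exact Category.comp_id _) (p ^ m)
  rw [← hN] at h
  refine h.trans ?_
  rw [← Nat.cast_smul_eq_nsmul K, Nat.cast_pow, CharP.cast_eq_zero, zero_pow hm, zero_smul]
end KoszulCalc

/-- for an odd prime `p`, `n ≥ 2`, and `K` a field of characteristic `p`, with
`M = ZMod p^n × ZMod p^n` and `σ(i,j) = (i, i+j)`:  (a) the endomorphism of `H^s(M; K)`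
induced by `σ^p` is the identity, and (b) `∑_{i=0}^{p^n − 1}` (endomorphism induced by
`σ^i`) is the zero map. -/
theorem stmt2 (p n : ℕ) (hp : p.Prime) (hodd : Odd p) (hn : 2 ≤ n)
    (K : Type) [Field K] [CharP K p] (s : ℕ) :
    cohomologyInducedMap K ((sigmaM (p ^ n)) ^ p : Monoid.End _) s =
      𝟙 (groupCohomology (Rep.trivial K (Multiplicative (ZMod (p ^ n) × ZMod (p ^ n))) K) s) ∧
    ∑ i ∈ Finset.range (p ^ n),
      cohomologyInducedMap K ((sigmaM (p ^ n)) ^ i : Monoid.End _) s = 0 := by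
  have : NeZero (p ^ n) := ⟨pow_ne_zero n hp.ne_zero⟩
  refine ⟨KoszulCalc.partA (p ^ n) p K s,
    KoszulCalc.partB (p ^ n) p (p ^ n) (n - 1) (by omega) ?_ K s⟩
  rw [← pow_succ', Nat.sub_add_cancel (by omega)]
end
end

section
/- Let p be an odd prime and let K be a field of characteristic p. Let φ be the K-algebra endomorphism of K[X,Y] determined by φ(X) = X and φ(Y) = X + Y, and let W ⊆ K[X,Y] be the K-linear span of the monomials {X^a Y^b : a ≥ 0, 0 ≤ b ≤ p − 1}. Then (φ − id)(W) ⊆ W, and the images of the polynomials Y^k (for 0 ≤ k ≤ p − 1) together with X^a Y^{p−1} (for a ≥ 1) under the quotient map W → W / (φ − id)(W) form a K-basis of the quotient space W / (φ − id)(W). -/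
noncomputable section

open MvPolynomial

variable (p : ℕ) (K : Type) [Field K]

/-- The `K`-span `W` of the monomials `{X^a Y^b : a ≥ 0, 0 ≤ b ≤ p − 1}` in `K[X,Y]`. -/
def Wspan : Submodule K (MvPolynomial (Fin 2) K) :=
  Submodule.span K {m | ∃ a b : ℕ, b ≤ p - 1 ∧ m = X 0 ^ a * X 1 ^ b}

/-- The polynomials `Y^k` (for `0 ≤ k ≤ p−1`) and `X^a Y^{p−1}` (for `a ≥ 1`). -/
def famFn : Fin p ⊕ ℕ → MvPolynomial (Fin 2) K
  | .inl k => X 1 ^ (k : ℕ)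
  | .inr a => X 0 ^ (a + 1) * X 1 ^ (p - 1)

theorem famFn_mem (i : Fin p ⊕ ℕ) : famFn p K i ∈ Wspan p K := by
  cases i with
  | inl k =>
      exact Submodule.subset_span ⟨0, k, by have := k.2; omega, by simp [famFn]⟩
  | inr a => exact Submodule.subset_span ⟨a + 1, p - 1, le_rfl, by simp [famFn]⟩

lemma aux_mon (a b : ℕ) : (X 0 ^ a * X 1 ^ b : MvPolynomial (Fin 2) K) =
    monomial (Finsupp.single 0 a + Finsupp.single 1 b) 1 := by
  rw [X_pow_eq_monomial, X_pow_eq_monomial, monomial_mul, one_mul]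

lemma aux_exp (a b c d : ℕ) :
    (Finsupp.single 0 a + Finsupp.single 1 b : Fin 2 →₀ ℕ) =
      Finsupp.single 0 c + Finsupp.single 1 d ↔ a = c ∧ b = d := by
  constructor
  · intro h
    have h0 := DFunLike.congr_fun h 0
    have h1 := DFunLike.congr_fun h 1
    simp at h0 h1
    exact ⟨h0, h1⟩
  · rintro ⟨rfl, rfl⟩; rfl

lemma aux_coeff (a b c d : ℕ) :
    coeff (Finsupp.single 0 c + Finsupp.single 1 d) (X 0 ^ a * X 1 ^ b : MvPolynomial (Fin 2) K)
      = if a = c ∧ b = d then 1 else 0 := by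
  classical
  rw [aux_mon, coeff_monomial]
  simp only [aux_exp]

/-- The image of `φ - 1`. -/
def Mspan : Submodule K (MvPolynomial (Fin 2) K) :=
  Submodule.span K {m | ∃ a b : ℕ, b + 1 ≤ p - 1 ∧ m = X 0 ^ (a + 1) * X 1 ^ b}

lemma Mspan_le : Mspan p K ≤ Wspan p K := by
  apply Submodule.span_mono
  rintro _ ⟨a, b, hb, rfl⟩
  exact ⟨a + 1, b, by omega, rfl⟩

lemma aux_formula (φ : MvPolynomial (Fin 2) K →ₐ[K] MvPolynomial (Fin 2) K)
    (hX : φ (X 0) = X 0) (hY : φ (X 1) = X 0 + X 1) (a b : ℕ) :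
    (φ.toLinearMap - LinearMap.id : MvPolynomial (Fin 2) K →ₗ[K] MvPolynomial (Fin 2) K)
        (X 0 ^ a * X 1 ^ b) =
      ∑ i ∈ Finset.range b, (b.choose i : K) • (X 0 ^ (a + (b - i)) * X 1 ^ i) := by
  have : (X 0 + X 1 : MvPolynomial (Fin 2) K) ^ b = X 1 ^ b +
      ∑ i ∈ Finset.range b, (b.choose i : K) • (X 0 ^ (b - i) * X 1 ^ i) := by
    rw [add_comm (X 0), add_pow, Finset.sum_range_succ, add_comm]
    congr 1
    · simp
    · refine Finset.sum_congr rfl fun i _ => ?_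
      rw [smul_eq_C_mul, map_natCast]; ring
  simp only [LinearMap.sub_apply, AlgHom.toLinearMap_apply, map_mul, map_pow, hX, hY,
    LinearMap.id_apply, this, mul_add, add_sub_cancel_left, Finset.mul_sum]
  refine Finset.sum_congr rfl fun i _ => ?_
  rw [mul_smul_comm, pow_add, mul_assoc]

lemma aux_map (hp : p.Prime) (hchar : CharP K p)
    (φ : MvPolynomial (Fin 2) K →ₐ[K] MvPolynomial (Fin 2) K)
    (hX : φ (X 0) = X 0) (hY : φ (X 1) = X 0 + X 1) :
    Submodule.map (φ.toLinearMap - LinearMap.id) (Wspan p K) = Mspan p K := by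
  apply le_antisymm
  · rw [Wspan, Submodule.map_span, Submodule.span_le]
    rintro _ ⟨_, ⟨a, b, hb, rfl⟩, rfl⟩
    rw [aux_formula K φ hX hY]
    refine Submodule.sum_mem _ fun i hi => Submodule.smul_mem _ _ (Submodule.subset_span ?_)
    have := Finset.mem_range.1 hi
    exact ⟨a + (b - i) - 1, i, by omega, by congr 2; omega⟩
  · rw [Mspan, Submodule.span_le]
    rintro _ ⟨a, b, hb, rfl⟩
    induction b using Nat.strong_induction_on generalizing a with
    | _ b ih =>
    have h : (φ.toLinearMap - LinearMap.id : MvPolynomial (Fin 2) K →ₗ[K] MvPolynomial (Fin 2) K)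
        (X 0 ^ a * X 1 ^ (b + 1)) ∈
        Submodule.map (φ.toLinearMap - LinearMap.id) (Wspan p K) :=
      Submodule.mem_map_of_mem (Submodule.subset_span ⟨a, b + 1, hb, rfl⟩)
    rw [aux_formula K φ hX hY, Finset.sum_range_succ] at h
    have h2 := (Submodule.add_mem_iff_right _ (Submodule.sum_mem _ fun i hi => ?_)).1 h
    · have hne : (((b + 1).choose b : ℕ) : K) ≠ 0 := by
        rw [Nat.choose_succ_self_right, Ne, CharP.cast_eq_zero_iff K p]
        intro hd
        have := Nat.le_of_dvd (Nat.succ_pos _) hd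
        have := hp.pos
        omega
      have h3 := (Submodule.smul_mem_iff _ hne).1 h2
      rwa [show b + 1 - b = 1 by omega] at h3
    · have hi' := Finset.mem_range.1 hi
      apply Submodule.smul_mem
      have := ih i hi' (a + (b - i)) (by omega)
      rwa [show a + (b - i) + 1 = a + (b + 1 - i) by omega] at this

/-- Exponents of the family. -/
def famA : Fin p ⊕ ℕ → ℕ
  | .inl _ => 0
  | .inr a => a + 1

/-- Exponents of the family. -/
def famB : Fin p ⊕ ℕ → ℕ
  | .inl k => k
  | .inr _ => p - 1

lemma fam_eq (i : Fin p ⊕ ℕ) : famFn p K i = X 0 ^ famA p i * X 1 ^ famB p i := by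
  cases i <;> simp [famFn, famA, famB]

lemma fam_inj (i j : Fin p ⊕ ℕ) : (famA p i = famA p j ∧ famB p i = famB p j) ↔ i = j := by
  cases i <;> cases j <;> simp [famA, famB, Fin.ext_iff]

/-- The coefficient map. -/
def famT : MvPolynomial (Fin 2) K →ₗ[K] (Fin p ⊕ ℕ → K) :=
  LinearMap.pi fun i => lcoeff K (Finsupp.single 0 (famA p i) + Finsupp.single 1 (famB p i))

lemma famT_M (x : MvPolynomial (Fin 2) K) (hx : x ∈ Mspan p K) : famT p K x = 0 := by
  have : Mspan p K ≤ LinearMap.ker (famT p K) := by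
    rw [Mspan, Submodule.span_le]
    rintro _ ⟨a, b, hb, rfl⟩
    simp only [SetLike.mem_coe, LinearMap.mem_ker]
    ext i
    simp only [famT, LinearMap.pi_apply, lcoeff_apply, aux_coeff, Pi.zero_apply]
    rw [if_neg]
    rintro ⟨h1, h2⟩
    cases i <;> simp [famA, famB] at h1 h2
    omega
  exact this hx

/-- for an odd prime `p` and `K` of characteristic `p`, with `φ` the
`K`-algebra endomorphism of `K[X,Y]` given by `φ(X) = X`, `φ(Y) = X + Y`, and `W` the span
of `{X^a Y^b : 0 ≤ b ≤ p − 1}`: one has `(φ − id)(W) ⊆ W`, and the images of `Y^k`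
(`0 ≤ k ≤ p − 1`) and `X^a Y^{p−1}` (`a ≥ 1`) form a `K`-basis of `W / (φ − id)(W)`. -/
theorem stmt8 (hp : p.Prime) (hodd : Odd p) (hchar : CharP K p)
    (φ : MvPolynomial (Fin 2) K →ₐ[K] MvPolynomial (Fin 2) K)
    (hX : φ (X 0) = X 0) (hY : φ (X 1) = X 0 + X 1) :
    Submodule.map (φ.toLinearMap - LinearMap.id) (Wspan p K) ≤ Wspan p K ∧
    ∃ B : Module.Basis (Fin p ⊕ ℕ) K
        (↥(Wspan p K) ⧸
          (Submodule.map (φ.toLinearMap - LinearMap.id) (Wspan p K)).comap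
            (Wspan p K).subtype),
      ∀ i : Fin p ⊕ ℕ,
        B i = Submodule.Quotient.mk ⟨famFn p K i, famFn_mem p K i⟩ := by
  rw [aux_map p K hp hchar φ hX hY]
  refine ⟨Mspan_le p K, ?_⟩
  classical
  let v : Fin p ⊕ ℕ → (↥(Wspan p K) ⧸ (Mspan p K).comap (Wspan p K).subtype) :=
    fun i => Submodule.Quotient.mk ⟨famFn p K i, famFn_mem p K i⟩
  have hli : LinearIndependent K v := by
    let T := ((Mspan p K).comap (Wspan p K).subtype).liftQ
      ((famT p K).comp (Wspan p K).subtype) (by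
        intro x hx
        exact famT_M p K _ hx)
    apply LinearIndependent.of_comp T
    have : (T ∘ v) = fun i => Pi.single i (1 : K) := by
      funext i
      ext j
      change famT p K (famFn p K i) j = _
      rw [fam_eq]
      simp only [famT, LinearMap.pi_apply, lcoeff_apply, aux_coeff, fam_inj, Pi.single_apply]
      simp only [eq_comm]
    rw [this]
    exact Pi.linearIndependent_single_one _ _
  have hsp : ⊤ ≤ Submodule.span K (Set.range v) := by
    rintro x -
    obtain ⟨⟨x, hx⟩, rfl⟩ := Submodule.Quotient.mk_surjective _ x
    induction hx using Submodule.span_induction with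
    | mem x h =>
      obtain ⟨a, b, hb, rfl⟩ := h
      have hpos := hp.pos
      by_cases ha : a = 0
      · subst ha
        apply Submodule.subset_span
        refine ⟨.inl ⟨b, by omega⟩, ?_⟩
        simp [v, famFn]
      by_cases hb' : b = p - 1
      · subst hb'
        apply Submodule.subset_span
        refine ⟨.inr (a - 1), ?_⟩
        simp [v, famFn, show a - 1 + 1 = a by omega]
      · convert Submodule.zero_mem _
        rw [Submodule.Quotient.mk_eq_zero]
        exact Submodule.subset_span ⟨a - 1, b, by omega, by simp [show a - 1 + 1 = a by omega]⟩
    | zero => exact Submodule.zero_mem _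
    | add x y hx hy h1 h2 => exact Submodule.add_mem _ h1 h2
    | smul c x hx h => exact Submodule.smul_mem _ c h
  exact ⟨Module.Basis.mk hli hsp, fun i => Module.Basis.mk_apply hli hsp i⟩
end
end
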